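/- arXiv:2110.14176 — 3 statements merged into one kernel-verified Lean document; each statement's English description precedes it below -/
import Mathlib

section
/- Let (G,σ) be a signed graph, let x and y be vertices of G, and let W be an (x–y)-walk of length p in (G,σ). If W is positive, then in EDC(G,σ) there exist an (x⁺–y⁺)-walk and an (x⁻–y⁻)-walk, both positive and of length p, and an (x⁺–y⁻)-walk and an (x⁻–y⁺)-walk, both negative and of length p+1. If W is negative, then in EDC(G,σ) there exist an (x⁺–y⁻)-walk and an (x⁻–y⁺)-walk, both positive and of length p, and an (x⁺–y⁺)-walk and an (x⁻–y⁻)-walk, both negative and of length p+1. -/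
open SimpleGraph

namespace SignedPaper

variable {V : Type*} {W : Type*}

/-- The product of the signs (values of `σ`) along the darts of a walk. -/
def walkSign {G : SimpleGraph V} (σ : V → V → ℤ) {a b : V} (w : G.Walk a b) : ℤ :=
  (w.darts.map fun d => σ d.toProd.1 d.toProd.2).prod

/-- The length of a walk in a weighted signed graph: the sum of the absolute
values of the weights of its edges, with multiplicity. -/
def walkWLen {G : SimpleGraph V} (ω : V → V → ℤ) {a b : V} (w : G.Walk a b) : ℕ :=
  (w.darts.map fun d => (ω d.toProd.1 d.toProd.2).natAbs).sum

/-- Walk-girth of type `ij` of a signed graph: the length of a shortest closed walk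
which is negative iff `neg` and of odd length iff `odd` (`⊤` if none exists). -/
noncomputable def sGirth (G : SimpleGraph V) (σ : V → V → ℤ) (neg odd : Bool) : ℕ∞ :=
  sInf {n : ℕ∞ | ∃ (a : V) (w : G.Walk a a), (w.length : ℕ∞) = n ∧
    (walkSign σ w < 0 ↔ neg = true) ∧ (Odd w.length ↔ odd = true)}

/-- Walk-girth of type `ij` of a weighted signed graph. -/
noncomputable def wGirth (G : SimpleGraph V) (ω : V → V → ℤ) (neg odd : Bool) : ℕ∞ :=
  sInf {n : ℕ∞ | ∃ (a : V) (w : G.Walk a a), (walkWLen ω w : ℕ∞) = n ∧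
    (walkSign ω w < 0 ↔ neg = true) ∧ (Odd (walkWLen ω w) ↔ odd = true)}

/-- A graph homomorphism is a homomorphism of signed graphs if it preserves
the signs of all closed walks. -/
def IsSignedHom {G : SimpleGraph V} {H : SimpleGraph W} (σ : V → V → ℤ) (π : W → W → ℤ)
    (f : G →g H) : Prop :=
  ∀ (a : V) (w : G.Walk a a), walkSign π (w.map f) = walkSign σ w

/-- A signed graph is `g`-wide if it has no positive closed walk of odd length, and
every negative closed walk has length at least `g` and of the same parity as `g`. -/
def gWide (G : SimpleGraph V) (σ : V → V → ℤ) (g : ℕ) : Prop :=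
  (∀ (a : V) (w : G.Walk a a), 0 < walkSign σ w → ¬ Odd w.length) ∧
  (∀ (a : V) (w : G.Walk a a), walkSign σ w < 0 → g ≤ w.length ∧ (Odd w.length ↔ Odd g))

open Classical in
/-- The algebraic distance between two vertices of a signed graph. -/
noncomputable def adist (G : SimpleGraph V) (σ : V → V → ℤ) (u v : V) : ℤ :=
  if ∃ w : G.Walk u v, w.IsPath ∧ w.length = G.dist u v ∧ 0 < walkSign σ w
  then (G.dist u v : ℤ) else -(G.dist u v : ℤ)

/-- The underlying graph of the Extended Double Cover of a signed graph:
`(v, true)` plays the role of `v⁺` and `(v, false)` of `v⁻`. -/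
def EDCsg (G : SimpleGraph V) (σ : V → V → ℤ) (hσ : ∀ u v, σ u v = σ v u) :
    SimpleGraph (V × Bool) where
  Adj x y := (x.1 = y.1 ∧ x.2 ≠ y.2) ∨ (G.Adj x.1 y.1 ∧ (x.2 = y.2 ↔ 0 < σ x.1 y.1))
  symm.symm := fun x y h => by
    rcases h with ⟨h1, h2⟩ | ⟨ha, hb⟩
    · exact Or.inl ⟨h1.symm, h2.symm⟩
    · refine Or.inr ⟨ha.symm, ?_⟩
      rw [hσ y.1 x.1, eq_comm]
      exact hb
  loopless.irrefl := fun x h => by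
    rcases h with ⟨-, h⟩ | ⟨h, -⟩
    · exact h rfl
    · exact G.loopless.irrefl _ h

open Classical in
/-- The signature of the Extended Double Cover: edges `v⁺v⁻` are negative,
all other edges are positive. -/
noncomputable def edcSign : V × Bool → V × Bool → ℤ := fun x y =>
  if x.1 = y.1 then -1 else 1

/-- The underlying graph of the Extended Double Cover of a weighted signed graph. -/
def EDCw (G : SimpleGraph V) : SimpleGraph (V × Bool) where
  Adj x y := (x.1 = y.1 ∧ x.2 ≠ y.2) ∨ G.Adj x.1 y.1
  symm.symm := fun x y h => by
    rcases h with ⟨h1, h2⟩ | h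
    · exact Or.inl ⟨h1.symm, h2.symm⟩
    · exact Or.inr h.symm
  loopless.irrefl := fun x h => by
    rcases h with ⟨-, h⟩ | h
    · exact h rfl
    · exact G.loopless.irrefl _ h

open Classical in
/-- The weights of the Extended Double Cover of a weighted signed graph `(G, ω)`. -/
noncomputable def EDCwWeight (ω : V → V → ℤ) : V × Bool → V × Bool → ℤ := fun x y =>
  if x.1 = y.1 then -1
  else if x.2 = y.2 then (if 0 < ω x.1 y.1 then ω x.1 y.1 else ω x.1 y.1 - 1)
  else (if 0 < ω x.1 y.1 then -(ω x.1 y.1 + 1) else -(ω x.1 y.1))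

/-- `G` has a `K₄`-minor: there are four disjoint nonempty connected branch sets,
pairwise joined by an edge. -/
def HasK4Minor (G : SimpleGraph V) : Prop :=
  ∃ S : Fin 4 → Set V,
    (∀ i, (G.induce (S i)).Connected) ∧
    (∀ i j, i ≠ j → Disjoint (S i) (S j)) ∧
    (∀ i j, i ≠ j → ∃ u ∈ S i, ∃ v ∈ S j, G.Adj u v)

/-- A signed graph `(B, π)` is SP-complete if every connected signed graph whose
underlying graph is finite and `K₄`-minor-free and which satisfies the conclusion of
the no-homomorphism lemma with respect to `(B, π)` admits a homomorphism to `(B, π)`. -/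
def SPComplete (B : SimpleGraph W) (π : W → W → ℤ) : Prop :=
  ∀ (V' : Type) (G : SimpleGraph V') (σ : V' → V' → ℤ),
    Finite V' → (∀ u v, σ u v = σ v u) →
    (∀ u v, G.Adj u v → σ u v = 1 ∨ σ u v = -1) →
    G.Connected → ¬ HasK4Minor G →
    (∀ neg odd : Bool, sGirth B π neg odd ≤ sGirth G σ neg odd) →
    ∃ f : G →g B, IsSignedHom σ π f

/-- The cylinder `C_{2a} □ P_b` on vertex set `{0,…,2a-1} × {0,…,b-1}`. -/
def cylT (a b : ℕ) : SimpleGraph (Fin (2 * a) × Fin b) where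
  Adj x y := (x.1 = y.1 ∧ ((x.2.val : ℤ) - (y.2.val : ℤ)).natAbs = 1) ∨
    (x.2 = y.2 ∧ (((x.1.val : ℤ) - (y.1.val : ℤ)).natAbs = 1 ∨
      ((x.1.val : ℤ) - (y.1.val : ℤ)).natAbs = 2 * a - 1))
  symm.symm := fun x y h => by
    rcases h with ⟨h1, h2⟩ | ⟨h1, h2 | h2⟩
    · exact Or.inl ⟨h1.symm, by omega⟩
    · exact Or.inr ⟨h1.symm, Or.inl (by omega)⟩
    · exact Or.inr ⟨h1.symm, Or.inr (by omega)⟩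
  loopless.irrefl := fun x h => by
    have hpos : 0 < 2 * a := x.1.pos
    rcases h with ⟨-, h⟩ | ⟨-, h | h⟩ <;> omega

/-- Two vertices of the cylinder are antipodal if `|Δi| + |Δj| = a + b - 1`. -/
def antip (a b : ℕ) (x y : Fin (2 * a) × Fin b) : Prop :=
  ((x.1.val : ℤ) - (y.1.val : ℤ)).natAbs + ((x.2.val : ℤ) - (y.2.val : ℤ)).natAbs = a + b - 1

/-- The twisted tube: the cylinder together with the antipodal edges `J`. -/
def twistedTube (a b : ℕ) : SimpleGraph (Fin (2 * a) × Fin b) where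
  Adj x y := (cylT a b).Adj x y ∨ (x ≠ y ∧ antip a b x y)
  symm.symm := fun x y h => by
    rcases h with h | ⟨hne, h⟩
    · exact Or.inl ((cylT a b).symm.symm _ _ h)
    · refine Or.inr ⟨hne.symm, ?_⟩
      unfold antip at h ⊢
      omega
  loopless.irrefl := fun x h => by
    rcases h with h | ⟨hne, -⟩
    · exact (cylT a b).loopless.irrefl x h
    · exact hne rfl

/-- The signature of the twisted tube: antipodal edges (the set `J`) are negative,
all other edges are positive. -/
def ttSign (a b : ℕ) (x y : Fin (2 * a) × Fin b) : ℤ :=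
  if ((x.1.val : ℤ) - (y.1.val : ℤ)).natAbs + ((x.2.val : ℤ) - (y.2.val : ℤ)).natAbs
      = a + b - 1 then -1 else 1

/-- The underlying graph of the signed projective cube `SPC(k)`: vertices are elements
of `ℤ₂^k`, adjacent if they differ in exactly one coordinate or in all coordinates. -/
def spcGraph (k : ℕ) : SimpleGraph (Fin k → ZMod 2) where
  Adj x y := x ≠ y ∧ (hammingDist x y = 1 ∨ hammingDist x y = k)
  symm.symm := fun x y h => ⟨h.1.symm, by rw [hammingDist_comm]; exact h.2⟩
  loopless.irrefl := fun x h => h.1 rfl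

/-- The signature of `SPC(k)`: an edge is negative iff its endpoints differ in
all coordinates. -/
def spcSign (k : ℕ) (x y : Fin k → ZMod 2) : ℤ :=
  if hammingDist x y = k then -1 else 1

lemma spcSign_symm (k : ℕ) : ∀ x y : Fin k → ZMod 2, spcSign k x y = spcSign k y x := by
  intro x y
  unfold spcSign
  rw [hammingDist_comm]

/-- The function `f_g`. -/
def fg (g : ℕ) (x : ℤ) : ℤ := if 0 < x then x else (g : ℤ) + x

/-- `(G, σ)` is (a realization of) the signed graph `T_g(p,q,r)`: three distinguished
vertices `x, y, z` joined by six internally disjoint paths of prescribed lengths and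
signs, whose edges exhaust `G`. -/
def IsTgpqr (G : SimpleGraph V) (σ : V → V → ℤ) (g : ℕ) (p q r : ℤ) : Prop :=
  ∃ (x y z : V) (P1 P2 : G.Walk x y) (Q1 Q2 : G.Walk y z) (R1 R2 : G.Walk z x),
    x ≠ y ∧ y ≠ z ∧ z ≠ x ∧
    P1.IsPath ∧ P2.IsPath ∧ Q1.IsPath ∧ Q2.IsPath ∧ R1.IsPath ∧ R2.IsPath ∧
    P1.length = p.natAbs ∧ P2.length = g - p.natAbs ∧
    Q1.length = q.natAbs ∧ Q2.length = g - q.natAbs ∧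
    R1.length = r.natAbs ∧ R2.length = g - r.natAbs ∧
    walkSign σ P1 = Int.sign p ∧ walkSign σ P2 = -Int.sign p ∧
    walkSign σ Q1 = Int.sign q ∧ walkSign σ Q2 = -Int.sign q ∧
    walkSign σ R1 = Int.sign r ∧ walkSign σ R2 = -Int.sign r ∧
    (∀ e ∈ G.edgeSet, e ∈ P1.edges ∨ e ∈ P2.edges ∨ e ∈ Q1.edges ∨ e ∈ Q2.edges ∨
      e ∈ R1.edges ∨ e ∈ R2.edges) ∧
    (∀ i j : Fin 6, i ≠ j → ∀ v : V,
      v ∈ (![{v | v ∈ P1.support}, {v | v ∈ P2.support}, {v | v ∈ Q1.support},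
            {v | v ∈ Q2.support}, {v | v ∈ R1.support}, {v | v ∈ R2.support}] : Fin 6 → Set V) i →
      v ∈ (![{v | v ∈ P1.support}, {v | v ∈ P2.support}, {v | v ∈ Q1.support},
            {v | v ∈ Q2.support}, {v | v ∈ R1.support}, {v | v ∈ R2.support}] : Fin 6 → Set V) j →
      v = x ∨ v = y ∨ v = z)

@[simp]
lemma walkSign_nil {G : SimpleGraph V} (σ : V → V → ℤ) (v : V) :
    walkSign σ (Walk.nil : G.Walk v v) = 1 :=
  rfl

@[simp]
lemma walkSign_cons {G : SimpleGraph V} (σ : V → V → ℤ) {u v w : V} (h : G.Adj u v)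
    (P : G.Walk v w) : walkSign σ (Walk.cons h P) = σ u v * walkSign σ P :=
  rfl

lemma edcSign_of_ne {u v : V} (h : u ≠ v) (b c : Bool) : edcSign (u, b) (v, c) = 1 :=
  if_neg h

lemma edcSign_self (v : V) (b c : Bool) : edcSign (v, b) (v, c) = -1 :=
  if_pos rfl

lemma mul_pos_iff_pos_iff_pos {R : Type*} [Ring R] [LinearOrder R] [IsStrictOrderedRing R]
    {r s : R} (hr : r ≠ 0) (hs : s ≠ 0) : 0 < r * s ↔ (0 < r ↔ 0 < s) := by
  rcases hr.lt_or_gt with hr | hr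
  · rw [← neg_mul_neg, mul_pos_iff_of_pos_left (neg_pos.mpr hr), neg_pos,
      iff_false_left hr.not_gt, not_lt, hs.le_iff_lt]
  · rw [mul_pos_iff_of_pos_left hr, iff_true_left hr]

lemma exists_bool_eq_iff_and_eq_iff {b c : Bool} {p q : Prop} (h : b = c ↔ (p ↔ q)) :
    ∃ d : Bool, (b = d ↔ p) ∧ (d = c ↔ q) := by
  by_cases hp : p
  · exact ⟨b, iff_of_true rfl hp, h.trans (iff_true_left hp)⟩
  · refine ⟨!b, iff_of_false (by simp) hp, ?_⟩
    rw [Bool.not_eq, ne_eq, h, iff_false_left hp, not_not]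

section Lift

variable {G : SimpleGraph V} {σ : V → V → ℤ} (hσ : ∀ u v, σ u v = σ v u) {x y : V}

/-- The lift of a walk changes sheet exactly at its negative edges, so it ends on the sheet it
started from if and only if their number, with multiplicity, is even. -/
lemma exists_positive_lift (P : G.Walk x y) (hP : walkSign σ P ≠ 0) {b c : Bool}
    (hbc : b = c ↔ 0 < walkSign σ P) :
    ∃ w : (EDCsg G σ hσ).Walk (x, b) (y, c), w.length = P.length ∧ walkSign edcSign w = 1 := by
  induction P generalizing b with
  | nil =>
    obtain rfl : b = c := hbc.mpr (by simp only [walkSign_nil, zero_lt_one])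
    exact ⟨Walk.nil, rfl, rfl⟩
  | @cons u v _ huv Q ih =>
    rw [walkSign_cons] at hP hbc
    obtain ⟨hσuv, hQ⟩ := mul_ne_zero_iff.mp hP
    obtain ⟨d, hbd, hdc⟩ :=
      exists_bool_eq_iff_and_eq_iff (hbc.trans (mul_pos_iff_pos_iff_pos hσuv hQ))
    obtain ⟨w, hlen, hsign⟩ := ih hQ hdc
    have hadj : (EDCsg G σ hσ).Adj (u, b) (v, d) := Or.inr ⟨huv, hbd⟩
    refine ⟨Walk.cons hadj w, congrArg (· + 1) hlen, ?_⟩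
    rw [walkSign_cons, edcSign_of_ne huv.ne, hsign, one_mul]

lemma exists_opposite_sign_walk_of_flip_start {b : Bool} {z : V × Bool} {p : ℕ} {s : ℤ}
    (h : ∃ w : (EDCsg G σ hσ).Walk (x, !b) z, w.length = p ∧ walkSign edcSign w = s) :
    ∃ w : (EDCsg G σ hσ).Walk (x, b) z, w.length = p + 1 ∧ walkSign edcSign w = -s := by
  obtain ⟨w, hlen, hsign⟩ := h
  have hadj : (EDCsg G σ hσ).Adj (x, b) (x, !b) := Or.inl ⟨rfl, (Bool.not_ne_self b).symm⟩
  refine ⟨Walk.cons hadj w, congrArg (· + 1) hlen, ?_⟩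
  rw [walkSign_cons, edcSign_self, hsign, neg_one_mul]

end Lift

theorem EDC_walk_lifts_general {G : SimpleGraph V} {σ : V → V → ℤ}
    (hσ : ∀ u v, σ u v = σ v u) {x y : V} (P : G.Walk x y) :
    (0 < walkSign σ P →
      (∀ b : Bool, ∃ w : (EDCsg G σ hσ).Walk (x, b) (y, b),
        w.length = P.length ∧ walkSign edcSign w = 1) ∧
      (∀ b : Bool, ∃ w : (EDCsg G σ hσ).Walk (x, b) (y, !b),
        w.length = P.length + 1 ∧ walkSign edcSign w = -1)) ∧
    (walkSign σ P < 0 →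
      (∀ b : Bool, ∃ w : (EDCsg G σ hσ).Walk (x, b) (y, !b),
        w.length = P.length ∧ walkSign edcSign w = 1) ∧
      (∀ b : Bool, ∃ w : (EDCsg G σ hσ).Walk (x, b) (y, b),
        w.length = P.length + 1 ∧ walkSign edcSign w = -1)) := by
  constructor
  · intro hpos
    have lift (b : Bool) := exists_positive_lift hσ P hpos.ne' (iff_of_true (Eq.refl b) hpos)
    exact ⟨lift, fun b => exists_opposite_sign_walk_of_flip_start hσ (lift !b)⟩
  · intro hneg
    have lift {b c : Bool} (hbc : b ≠ c) :=
      exists_positive_lift hσ P hneg.ne (iff_of_false hbc hneg.not_gt)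
    exact ⟨fun b => lift (Bool.not_ne_self b).symm,
      fun b => exists_opposite_sign_walk_of_flip_start hσ (lift (Bool.not_ne_self b))⟩

/-- lifts of a walk to the Extended Double Cover. If `W` is a positive
`(x–y)`-walk of length `p` in `(G,σ)`, then `EDC(G,σ)` has positive `(x⁺–y⁺)`- and
`(x⁻–y⁻)`-walks of length `p` and negative `(x⁺–y⁻)`- and `(x⁻–y⁺)`-walks of length
`p+1`; if `W` is negative, the same holds with the roles of the pairs exchanged. -/
theorem EDC_walk_lifts {V : Type*} [Fintype V]
    (G : SimpleGraph V) (σ : V → V → ℤ)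
    (hsymm : ∀ u v, σ u v = σ v u) (hpm : ∀ u v, G.Adj u v → σ u v = 1 ∨ σ u v = -1)
    (x y : V) (p : ℕ) (W : G.Walk x y) (hlen : W.length = p) :
    (walkSign σ W = 1 →
      (∃ w : (EDCsg G σ hsymm).Walk (x, true) (y, true),
        w.length = p ∧ walkSign edcSign w = 1) ∧
      (∃ w : (EDCsg G σ hsymm).Walk (x, false) (y, false),
        w.length = p ∧ walkSign edcSign w = 1) ∧
      (∃ w : (EDCsg G σ hsymm).Walk (x, true) (y, false),
        w.length = p + 1 ∧ walkSign edcSign w = -1) ∧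
      (∃ w : (EDCsg G σ hsymm).Walk (x, false) (y, true),
        w.length = p + 1 ∧ walkSign edcSign w = -1)) ∧
    (walkSign σ W = -1 →
      (∃ w : (EDCsg G σ hsymm).Walk (x, true) (y, false),
        w.length = p ∧ walkSign edcSign w = 1) ∧
      (∃ w : (EDCsg G σ hsymm).Walk (x, false) (y, true),
        w.length = p ∧ walkSign edcSign w = 1) ∧
      (∃ w : (EDCsg G σ hsymm).Walk (x, true) (y, true),
        w.length = p + 1 ∧ walkSign edcSign w = -1) ∧
      (∃ w : (EDCsg G σ hsymm).Walk (x, false) (y, false),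
        w.length = p + 1 ∧ walkSign edcSign w = -1)) := by
  have lifts := EDC_walk_lifts_general hsymm W
  simp only [Bool.forall_bool' true, and_assoc, hlen] at lifts
  exact ⟨fun h => lifts.1 (h ▸ one_pos), fun h => lifts.2 (h ▸ neg_one_lt_zero)⟩

end SignedPaper
end

section
/- Let g be a positive integer, let (G,σ) be a g-wide signed graph, and let C be a negative cycle of length g in (G,σ). Then for any two vertices u and v of C, the distance between u and v in G equals their distance along the cycle C, that is, d_G(u,v) = d_C(u,v). -/
open SimpleGraph

namespace SignedPaper

variable {V : Type*} {W : Type*}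

/-!
Let `A` and `B` be the two arcs of a shortest negative closed walk between `u` and `v`, and let
`P` be any walk from `u` to `v`. The signs of the closed walks `A P⁻¹` and `P B` multiply to
`sign (A B) * (sign P) ^ 2 < 0`, so one of the two is negative, hence at least as long as `A B`.
Cancelling the arc it shares with `A B`, the walk `P` is at least as long as the other arc.
-/

section Walks

variable {G : SimpleGraph V} {H : SimpleGraph W} {u v : V}

lemma dist_hom_le_dist (f : G →g H) (h : G.Reachable u v) :
    H.dist (f u) (f v) ≤ G.dist u v := by
  obtain ⟨p, hp⟩ := h.exists_walk_length_eq_dist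
  rw [← hp, ← p.length_map f]
  exact dist_le (p.map f)

lemma coe_dist_le_length {K : G.Subgraph} (p : G.Walk u v) (h : p.toSubgraph ≤ K) :
    K.coe.dist ⟨u, h.1 p.start_mem_verts_toSubgraph⟩ ⟨v, h.1 p.end_mem_verts_toSubgraph⟩ ≤
      p.length := by
  have hlen : p.mapToSubgraph.length = p.length :=
    (p.mapToSubgraph.length_map _).symm.trans (congrArg Walk.length p.map_mapToSubgraph_hom)
  rw [← hlen, ← p.mapToSubgraph.length_map (Subgraph.inclusion h)]
  exact dist_le _

lemma exists_append_eq_rotate [DecidableEq V] {x : V} (C : G.Walk x x) (hu : u ∈ C.support)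
    (hv : v ∈ C.support) :
    ∃ (A : G.Walk u v) (B : G.Walk v u), A.append B = C.rotate u hu :=
  ⟨_, _, Walk.take_spec _ ((C.mem_support_rotate_iff u hu).mpr hv)⟩

end Walks

section WalkSign

variable {G : SimpleGraph V} {σ : V → V → ℤ} {u v w : V}

lemma walkSign_append (p : G.Walk u v) (q : G.Walk v w) :
    walkSign σ (p.append q) = walkSign σ p * walkSign σ q := by
  simp [walkSign, Walk.darts_append]

lemma walkSign_reverse (hsymm : ∀ a b, σ a b = σ b a) (p : G.Walk u v) :
    walkSign σ p.reverse = walkSign σ p := by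
  simp [walkSign, Walk.darts_reverse, List.prod_reverse, Function.comp_def, hsymm]

lemma walkSign_rotate [DecidableEq V] (C : G.Walk v v) (hu : u ∈ C.support) :
    walkSign σ (C.rotate u hu) = walkSign σ C :=
  ((C.rotate_darts u hu).perm.map _).prod_eq

lemma walkSign_ne_zero (hσ : ∀ a b, G.Adj a b → σ a b ≠ 0) (p : G.Walk u v) :
    walkSign σ p ≠ 0 := by
  refine List.prod_ne_zero fun hzero ↦ ?_
  obtain ⟨d, -, hd⟩ := List.mem_map.mp hzero
  exact hσ _ _ d.adj hd

lemma walkSign_append_reverse_neg_or_walkSign_append_neg (hsymm : ∀ a b, σ a b = σ b a)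
    {A P : G.Walk u v} {B : G.Walk v u} (hAB : walkSign σ (A.append B) < 0)
    (hP : walkSign σ P ≠ 0) :
    walkSign σ (A.append P.reverse) < 0 ∨ walkSign σ (P.append B) < 0 := by
  have hprod : walkSign σ (A.append P.reverse) * walkSign σ (P.append B) < 0 := calc
    _ = walkSign σ (A.append B) * walkSign σ P ^ 2 := by
      simp only [walkSign_append, walkSign_reverse hsymm]
      ring
    _ < 0 := mul_neg_of_neg_of_pos hAB (sq_pos_of_ne_zero hP)
  by_contra! hnonneg
  exact hprod.not_ge (mul_nonneg hnonneg.1 hnonneg.2)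

end WalkSign

/-- A closed walk that attains the minimum length among the negative closed walks of a signed
graph; in a `g`-wide one, the negative cycles of length `g` are of this kind. Edge signs may be
arbitrary integers, of which only the sign matters; `length` always counts edges. -/
structure IsShortestNegative {G : SimpleGraph V} (σ : V → V → ℤ) {x : V} (C : G.Walk x x) :
    Prop where
  walkSign_neg : walkSign σ C < 0
  length_le : ∀ {a : V} (w : G.Walk a a), walkSign σ w < 0 → C.length ≤ w.length

lemma gWide.isShortestNegative {G : SimpleGraph V} {σ : V → V → ℤ} {g : ℕ} (hwide : gWide G σ g)
    {x : V} {C : G.Walk x x} (hlen : C.length = g) (hneg : walkSign σ C < 0) :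
    IsShortestNegative σ C where
  walkSign_neg := hneg
  length_le w hw := hlen.trans_le (hwide.2 _ w hw).1

namespace IsShortestNegative

variable {G : SimpleGraph V} {σ : V → V → ℤ} {u v x : V}

lemma rotate [DecidableEq V] {C : G.Walk x x} (hC : IsShortestNegative σ C)
    (hu : u ∈ C.support) : IsShortestNegative σ (C.rotate u hu) where
  walkSign_neg := (walkSign_rotate C hu).trans_lt hC.walkSign_neg
  length_le w hw := (C.length_rotate u hu).trans_le (hC.length_le w hw)

lemma min_length_le_length {A : G.Walk u v} {B : G.Walk v u}
    (hAB : IsShortestNegative σ (A.append B)) (hsymm : ∀ a b, σ a b = σ b a) {P : G.Walk u v}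
    (hP : walkSign σ P ≠ 0) : min A.length B.length ≤ P.length := by
  rcases walkSign_append_reverse_neg_or_walkSign_append_neg hsymm hAB.walkSign_neg hP with
    hneg | hneg
  · have hle := hAB.length_le _ hneg
    rw [Walk.length_append, Walk.length_append, Walk.length_reverse] at hle
    exact min_le_of_right_le (Nat.le_of_add_le_add_left hle)
  · have hle := hAB.length_le _ hneg
    rw [Walk.length_append, Walk.length_append] at hle
    exact min_le_of_left_le (Nat.le_of_add_le_add_right hle)

lemma min_length_le_dist {A : G.Walk u v} {B : G.Walk v u}
    (hAB : IsShortestNegative σ (A.append B)) (hsymm : ∀ a b, σ a b = σ b a)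
    (hσ : ∀ a b, G.Adj a b → σ a b ≠ 0) : min A.length B.length ≤ G.dist u v := by
  obtain ⟨P, hP⟩ := A.reachable.exists_walk_length_eq_dist
  exact hP ▸ hAB.min_length_le_length hsymm (walkSign_ne_zero hσ P)

end IsShortestNegative

theorem dist_eq_dist_on_negative_cycle_general {G : SimpleGraph V} {σ : V → V → ℤ}
    (hsymm : ∀ a b, σ a b = σ b a) (hσ : ∀ a b, G.Adj a b → σ a b ≠ 0) {x : V}
    {C : G.Walk x x} (hC : IsShortestNegative σ C) {u v : V} (hu : u ∈ C.toSubgraph.verts)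
    (hv : v ∈ C.toSubgraph.verts) :
    G.dist u v = C.toSubgraph.coe.dist ⟨u, hu⟩ ⟨v, hv⟩ := by
  classical
  have hu' : u ∈ C.support := C.mem_verts_toSubgraph.mp hu
  obtain ⟨A, B, hAB⟩ := exists_append_eq_rotate C hu' (C.mem_verts_toSubgraph.mp hv)
  have harcs : A.toSubgraph ⊔ B.toSubgraph = C.toSubgraph := by
    rw [← Walk.toSubgraph_append, hAB, Walk.toSubgraph_rotate]
  have hshortest : IsShortestNegative σ (A.append B) := hAB ▸ hC.rotate hu'
  apply le_antisymm
  · exact dist_hom_le_dist C.toSubgraph.hom (C.toSubgraph_connected ⟨u, hu⟩ ⟨v, hv⟩)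
  · calc
      C.toSubgraph.coe.dist ⟨u, hu⟩ ⟨v, hv⟩ ≤ min A.length B.length :=
        le_min (coe_dist_le_length A (le_sup_left.trans_eq harcs))
          (dist_comm.trans_le (coe_dist_le_length B (le_sup_right.trans_eq harcs)))
      _ ≤ G.dist u v := hshortest.min_length_le_dist hsymm hσ

/-- in a `g`-wide signed graph, the distance in `G` between two
vertices of a negative cycle `C` of length `g` equals their distance along `C`. -/
theorem dist_eq_dist_on_negative_cycle {V : Type*} [Fintype V]
    (G : SimpleGraph V) (σ : V → V → ℤ)
    (hsymm : ∀ u v, σ u v = σ v u) (hpm : ∀ u v, G.Adj u v → σ u v = 1 ∨ σ u v = -1)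
    (g : ℕ) (hg : 0 < g) (hwide : gWide G σ g)
    (x : V) (C : G.Walk x x) (hC : C.IsCycle) (hlen : C.length = g)
    (hneg : walkSign σ C = -1)
    (u v : V) (hu : u ∈ C.toSubgraph.verts) (hv : v ∈ C.toSubgraph.verts) :
    G.dist u v = C.toSubgraph.coe.dist ⟨u, hu⟩ ⟨v, hv⟩ := by
  have hσ : ∀ a b, G.Adj a b → σ a b ≠ 0 := fun a b hab ↦ by have := hpm a b hab; omega
  exact dist_eq_dist_on_negative_cycle_general hsymm hσ
    (hwide.isShortestNegative hlen (by simp [hneg])) hu hv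

end SignedPaper
end

section
/- For every integer k ≥ 2, the Extended Double Cover EDC(SPC(k)) is isomorphic to SPC(k+1) as a signed graph; that is, there exists a bijection from the vertex set of EDC(SPC(k)) to ℤ₂^{k+1} that maps edges to edges, non-edges to non-edges, and preserves the sign of every edge. -/
open SimpleGraph

namespace SignedPaper

variable {V : Type*} {W : Type*}

/-! Send `v⁺` to `(0, v)` and `v⁻` to `(1, v + 1)`, where adding the all-ones vector `1` flips every
coordinate. Two vertices of the same sheet lying over vertices at Hamming distance `d` are sent to
distance `d`, and two vertices of opposite sheets to distance `k + 1 - d`. Hence the positive edges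
of `SPC(k)` (`d = 1`, lifted inside the sheets) and its negative edges (`d = k`, lifted between
opposite sheets) all go to distance `1`, while the edges `v⁺v⁻` (`d = 0`) become the antipodal
pairs, at distance `k + 1`. -/

theorem hammingDist_fin_le {n : ℕ} {α : Fin n → Type*} [∀ i, DecidableEq (α i)] (x y : ∀ i, α i) :
    hammingDist x y ≤ n :=
  hammingDist_le_card_fintype.trans_eq (Fintype.card_fin n)

theorem hammingDist_cons {n : ℕ} {α : Fin (n + 1) → Type*} [∀ i, DecidableEq (α i)]
    (a b : α 0) (x y : ∀ i : Fin n, α i.succ) :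
    hammingDist (Fin.cons a x : ∀ i, α i) (Fin.cons b y) =
      (if a = b then 0 else 1) + hammingDist x y := by
  simp only [hammingDist, Fin.card_filter_univ_succ', Fin.cons_zero, Fin.cons_succ, ne_eq, ite_not]

theorem hammingDist_add_hammingDist_of_ne_iff_eq {ι : Type*} [Fintype ι] {α β : ι → Type*}
    [∀ i, DecidableEq (α i)] [∀ i, DecidableEq (β i)] {x y : ∀ i, α i} {x' y' : ∀ i, β i}
    (h : ∀ i, x' i ≠ y' i ↔ x i = y i) :
    hammingDist x' y' + hammingDist x y = Fintype.card ι := by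
  simp only [hammingDist, h]
  exact Finset.card_filter_add_card_filter_not _

theorem hammingDist_add_const_right {ι M : Type*} [Fintype ι] [DecidableEq M] [Add M]
    [IsRightCancelAdd M] (x y : ι → M) (c : M) :
    hammingDist (fun i => x i + c) (fun i => y i + c) = hammingDist x y :=
  hammingDist_comp (fun _ a => a + c) fun _ => add_left_injective c

theorem zmodTwo_add_ne_add_iff {c d : ZMod 2} (hcd : c ≠ d) (a b : ZMod 2) :
    a + c ≠ b + d ↔ a = b := by
  revert a b c d
  decide

section DoubleCover

variable {G : SimpleGraph V} {σ : V → V → ℤ} {hσ : ∀ u v, σ u v = σ v u}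

theorem EDCsg_adj_same_sheet {u v : V} {b : Bool} :
    (EDCsg G σ hσ).Adj (u, b) (v, b) ↔ G.Adj u v ∧ 0 < σ u v := by
  simp [EDCsg]

theorem EDCsg_adj_opposite_sheets {u v : V} {b c : Bool} (hbc : b ≠ c) :
    (EDCsg G σ hσ).Adj (u, b) (v, c) ↔ u = v ∨ G.Adj u v ∧ ¬0 < σ u v := by
  simp [EDCsg, hbc]

end DoubleCover

section ProjectiveCube

variable {k : ℕ} {x y : Fin k → ZMod 2}

theorem spcGraph_adj_iff (hk : k ≠ 0) :
    (spcGraph k).Adj x y ↔ hammingDist x y = 1 ∨ hammingDist x y = k := by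
  refine and_iff_right_of_imp fun h => hammingDist_ne_zero.mp ?_
  omega

theorem spcSign_pos_iff : 0 < spcSign k x y ↔ hammingDist x y ≠ k := by
  unfold spcSign
  split_ifs with h <;> simp [h]

theorem spcGraph_adj_and_spcSign_pos_iff (hk : k ≠ 1) :
    (spcGraph k).Adj x y ∧ 0 < spcSign k x y ↔ hammingDist x y = 1 := by
  simp only [spcGraph, spcSign_pos_iff, ← hammingDist_ne_zero]
  omega

theorem spcGraph_adj_and_not_spcSign_pos_iff (hk : k ≠ 0) :
    (spcGraph k).Adj x y ∧ ¬0 < spcSign k x y ↔ hammingDist x y = k := by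
  rw [spcGraph_adj_iff hk, spcSign_pos_iff]
  omega

end ProjectiveCube

/-- The first coordinate in `SPC(k + 1)` of a sheet of the double cover: `0` for the sheet of the
vertices `v⁺` (encoded by `true`) and `1` for that of the vertices `v⁻`. -/
def sheetBit : Bool ≃ ZMod 2 where
  toFun b := if b then 0 else 1
  invFun a := decide (a = 0)
  left_inv := by decide
  right_inv := by decide

/-- The isomorphism `EDC(SPC(k)) ≅ SPC(k + 1)` on vertices: `v⁺ ↦ (0, v)` and `v⁻ ↦ (1, v + 1)`,
where `v + 1` is the antipode of `v`. -/
def edcSpcEquiv (k : ℕ) : (Fin k → ZMod 2) × Bool ≃ (Fin (k + 1) → ZMod 2) :=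
  (Equiv.prodComm _ _).trans <|
    (sheetBit.prodShear fun b => Equiv.addRight fun _ => sheetBit b).trans <|
      Fin.consEquiv fun _ => ZMod 2

section Isomorphism

variable {k : ℕ}

theorem edcSpcEquiv_apply (x : Fin k → ZMod 2) (b : Bool) :
    edcSpcEquiv k (x, b) = Fin.cons (sheetBit b) fun i => x i + sheetBit b :=
  rfl

theorem hammingDist_edcSpcEquiv_same_sheet (x y : Fin k → ZMod 2) (b : Bool) :
    hammingDist (edcSpcEquiv k (x, b)) (edcSpcEquiv k (y, b)) = hammingDist x y := by
  rw [edcSpcEquiv_apply, edcSpcEquiv_apply, hammingDist_cons, hammingDist_add_const_right,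
    if_pos rfl, zero_add]

theorem hammingDist_edcSpcEquiv_opposite_sheets (x y : Fin k → ZMod 2) {b c : Bool} (hbc : b ≠ c) :
    hammingDist (edcSpcEquiv k (x, b)) (edcSpcEquiv k (y, c)) + hammingDist x y = k + 1 := by
  have hbit : sheetBit b ≠ sheetBit c := sheetBit.injective.ne hbc
  have hflip := hammingDist_add_hammingDist_of_ne_iff_eq
    fun i => zmodTwo_add_ne_add_iff hbit (x i) (y i)
  rw [Fintype.card_fin] at hflip
  rw [edcSpcEquiv_apply, edcSpcEquiv_apply, hammingDist_cons, if_neg hbit, add_assoc, hflip,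
    add_comm]

theorem spcGraph_adj_edcSpcEquiv_same_sheet (x y : Fin k → ZMod 2) (b : Bool) :
    (spcGraph (k + 1)).Adj (edcSpcEquiv k (x, b)) (edcSpcEquiv k (y, b)) ↔
      hammingDist x y = 1 := by
  have hle : hammingDist x y ≤ k := hammingDist_fin_le x y
  rw [spcGraph_adj_iff k.succ_ne_zero, hammingDist_edcSpcEquiv_same_sheet]
  omega

theorem spcGraph_adj_edcSpcEquiv_opposite_sheets (x y : Fin k → ZMod 2) {b c : Bool}
    (hbc : b ≠ c) :
    (spcGraph (k + 1)).Adj (edcSpcEquiv k (x, b)) (edcSpcEquiv k (y, c)) ↔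
      x = y ∨ hammingDist x y = k := by
  have hdist := hammingDist_edcSpcEquiv_opposite_sheets x y hbc
  rw [spcGraph_adj_iff k.succ_ne_zero, ← hammingDist_eq_zero (x := x)]
  omega

theorem EDCsg_spcGraph_adj_iff (hk : 2 ≤ k) (p q : (Fin k → ZMod 2) × Bool) :
    (EDCsg (spcGraph k) (spcSign k) (spcSign_symm k)).Adj p q ↔
      (spcGraph (k + 1)).Adj (edcSpcEquiv k p) (edcSpcEquiv k q) := by
  obtain ⟨x, b⟩ := p
  obtain ⟨y, c⟩ := q
  obtain rfl | hbc := eq_or_ne b c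
  · rw [EDCsg_adj_same_sheet, spcGraph_adj_and_spcSign_pos_iff (by omega),
      spcGraph_adj_edcSpcEquiv_same_sheet]
  · rw [EDCsg_adj_opposite_sheets hbc, spcGraph_adj_and_not_spcSign_pos_iff (by omega),
      spcGraph_adj_edcSpcEquiv_opposite_sheets x y hbc]

theorem hammingDist_edcSpcEquiv_eq_iff {p q : (Fin k → ZMod 2) × Bool} (hpq : p ≠ q) :
    hammingDist (edcSpcEquiv k p) (edcSpcEquiv k q) = k + 1 ↔ p.1 = q.1 := by
  obtain ⟨x, b⟩ := p
  obtain ⟨y, c⟩ := q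
  obtain rfl | hbc := eq_or_ne b c
  · have hxy : x ≠ y := fun h => hpq (by rw [h])
    have hle : hammingDist x y ≤ k := hammingDist_fin_le x y
    rw [hammingDist_edcSpcEquiv_same_sheet, iff_false_right hxy]
    omega
  · have hdist := hammingDist_edcSpcEquiv_opposite_sheets x y hbc
    change _ ↔ x = y
    rw [← hammingDist_eq_zero]
    omega

theorem spcSign_edcSpcEquiv {p q : (Fin k → ZMod 2) × Bool} (hpq : p ≠ q) :
    spcSign (k + 1) (edcSpcEquiv k p) (edcSpcEquiv k q) = edcSign p q := by
  simp only [spcSign, edcSign, hammingDist_edcSpcEquiv_eq_iff hpq]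
  -- The two sides now differ only in a decidability instance.
  congr

end Isomorphism

/-- for `k ≥ 2`, `EDC(SPC(k))` is isomorphic to `SPC(k+1)` as a
signed graph: there is a bijection on vertices mapping edges to edges, non-edges to
non-edges, and preserving the sign of every edge. -/
theorem EDC_SPC (k : ℕ) (hk : 2 ≤ k) :
    ∃ e : ((Fin k → ZMod 2) × Bool) ≃ (Fin (k + 1) → ZMod 2),
      (∀ x y, (EDCsg (spcGraph k) (spcSign k) (spcSign_symm k)).Adj x y ↔
        (spcGraph (k + 1)).Adj (e x) (e y)) ∧
      (∀ x y, (EDCsg (spcGraph k) (spcSign k) (spcSign_symm k)).Adj x y →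
        spcSign (k + 1) (e x) (e y) = edcSign x y) :=
  ⟨edcSpcEquiv k, EDCsg_spcGraph_adj_iff hk, fun _ _ h => spcSign_edcSpcEquiv h.ne⟩

end SignedPaper
end
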